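/- Let 0<c₁<⋯<c_m be non-integer reals and let (ξ₁,…,ξ_m)∈[−1/2,1/2)^m. Then lim_{N→∞} (1/N) ∑_{n=1}^{N} e(ξ₁⌊n^{c₁}⌋+⋯+ξ_m⌊n^{c_m}⌋) equals 1 if ξ₁=⋯=ξ_m=0, and equals 0 otherwise. -/

import Mathlib

/-!
The argument rests on Weyl's theorem for generalized polynomials: if `η₁, …, η_m` are real and not
all zero, then `e(η₁ n^{c₁} + ⋯ + η_m n^{c_m})` has mean zero (`meanZero_eC_sum_rpow`). The phase
`u` belongs to the class `PowerLike` of sequences whose iterated differences satisfy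
`Δᵏ u n ∼ L c(c-1)⋯(c-k+1) n^{c-k}` with `L ≠ 0`, where `c` is the largest exponent that occurs.
Van der Corput's difference theorem (`meanZero_of_correlations`) replaces `u` by `u (· + h) - u`,
which is in the same class with exponent `c - 1`; since `c` is not an integer the leading constant
stays nonzero, and one descends to `0 < c < 1`. There the increments of `u` tend to zero slowly and
regularly, and summation by parts concludes (`meanZero_eC_of_slow`).

The floors are removed one index at a time (`meanZero_floor`, `meanZero_partial`). With `x = n^{c_i}`
one has `e(ξ⌊x⌋) = e(ξx) e(-ξ{x})`, and the `1`-periodic function `e(-ξ{x})` is approximated in mean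
along `x = n^{c_i}` by trigonometric polynomials, a Fejér kernel absorbing its jump at the integers.
Thus the sum is approximated by combinations of `e(∑ (ξ_i + k_i) n^{c_i})` with integers `k_i`. If
some `ξ_i ≠ 0`, then `ξ_i` is not an integer, so `ξ_i + k_i ≠ 0` and each of these has mean zero.
-/

open MeasureTheory Filter Finset
open scoped ENNReal NNReal

noncomputable section

/-- `e(x) = e^{2πix}`. -/
def eC (x : ℝ) : ℂ := Complex.exp (2 * Real.pi * Complex.I * x)

/-- The exponential sum `(1/N) ∑_{n=1}^{N} e(ξ₁⌊n^{c₁}⌋ + ⋯ + ξ_m⌊n^{c_m}⌋)`. -/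
def expSum (m : ℕ) (c : Fin m → ℝ) (ξ : Fin m → ℝ) (N : ℕ) : ℂ :=
  (N : ℂ)⁻¹ * ∑ n ∈ Finset.Icc 1 N, eC (∑ i, ξ i * (⌊(n : ℝ) ^ c i⌋ : ℝ))

open scoped Classical in

/-! ### Sequences of mean zero -/

/-- The sequence `f` has mean zero: `(1/N) ∑_{n<N} f n → 0`. -/
def MeanZero (f : ℕ → ℂ) : Prop :=
  Tendsto (fun N : ℕ => (N : ℂ)⁻¹ * ∑ n ∈ range N, f n) atTop (nhds 0)

lemma meanZero_iff {f : ℕ → ℂ} :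
    MeanZero f ↔ ∀ ε > 0, ∀ᶠ N : ℕ in atTop, ‖∑ n ∈ range N, f n‖ ≤ ε * N := by
  unfold MeanZero
  rw [NormedAddGroup.tendsto_nhds_zero]
  constructor
  · intro h ε hε
    filter_upwards [h ε hε, eventually_gt_atTop 0] with N hN hN0
    have h0 : (0 : ℝ) < N := by exact_mod_cast hN0
    rw [norm_mul, norm_inv, Complex.norm_natCast, inv_mul_lt_iff₀ h0] at hN
    linarith
  · intro h ε hε
    filter_upwards [h (ε / 2) (by positivity), eventually_gt_atTop 0] with N hN hN0
    have h0 : (0 : ℝ) < N := by exact_mod_cast hN0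
    rw [norm_mul, norm_inv, Complex.norm_natCast, inv_mul_lt_iff₀ h0]
    nlinarith

lemma MeanZero.add {f g : ℕ → ℂ} (hf : MeanZero f) (hg : MeanZero g) :
    MeanZero (fun n => f n + g n) := by
  have := Tendsto.add hf hg
  simpa only [MeanZero, sum_add_distrib, mul_add, add_zero] using this

lemma MeanZero.const_mul {f : ℕ → ℂ} (hf : MeanZero f) (a : ℂ) :
    MeanZero (fun n => a * f n) := by
  have := Tendsto.const_mul a hf
  simpa only [MeanZero, ← mul_sum, mul_left_comm, mul_zero] using this

lemma MeanZero.zero : MeanZero (fun _ => 0) := by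
  simp [MeanZero]

lemma MeanZero.sum {ι : Type*} (s : Finset ι) {f : ι → ℕ → ℂ} (hf : ∀ i ∈ s, MeanZero (f i)) :
    MeanZero (fun n => ∑ i ∈ s, f i n) := by
  classical
  induction s using Finset.induction_on with
  | empty => simpa using MeanZero.zero
  | insert a s ha ih =>
    simp only [sum_insert ha]
    exact (hf a (mem_insert_self a s)).add (ih fun i hi => hf i (mem_insert_of_mem hi))

lemma meanZero_of_tendsto {f : ℕ → ℂ} (hf : Tendsto f atTop (nhds 0)) : MeanZero f := by
  have := hf.cesaro_smul
  simpa [MeanZero] using this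

lemma MeanZero.congr' {f g : ℕ → ℂ} (hf : MeanZero f) (h : ∀ᶠ n in atTop, f n = g n) :
    MeanZero g := by
  have h0 : Tendsto (fun n => g n - f n) atTop (nhds 0) := by
    refine tendsto_const_nhds.congr' ?_
    filter_upwards [h] with n hn
    simp [hn]
  simpa using hf.add (meanZero_of_tendsto h0)

lemma norm_sum_shift_sub_le {f : ℕ → ℂ} (hf : ∀ n, ‖f n‖ ≤ 1) (h N : ℕ) :
    ‖∑ n ∈ range N, f (n + h) - ∑ n ∈ range N, f n‖ ≤ 2 * h := by
  induction h with
  | zero => simp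
  | succ h ih =>
    have h1 : ∑ n ∈ range N, f (n + (h + 1)) - ∑ n ∈ range N, f (n + h) = f (N + h) - f h := by
      rw [← sum_sub_distrib]
      have := sum_range_sub (fun n => f (n + h)) N
      simp only [zero_add] at this
      rw [← this]
      refine sum_congr rfl fun n _ => ?_
      congr 2; ring
    have h2 : ‖f (N + h) - f h‖ ≤ 2 := by
      refine (norm_sub_le _ _).trans ?_
      linarith [hf (N + h), hf h]
    calc ‖∑ n ∈ range N, f (n + (h + 1)) - ∑ n ∈ range N, f n‖
        = ‖(∑ n ∈ range N, f (n + (h + 1)) - ∑ n ∈ range N, f (n + h))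
            + (∑ n ∈ range N, f (n + h) - ∑ n ∈ range N, f n)‖ := by congr 1; ring
      _ ≤ 2 + 2 * h := (norm_add_le _ _).trans (by rw [h1]; linarith)
      _ = 2 * ((h + 1 : ℕ) : ℝ) := by push_cast; ring

lemma eventually_const_le_mul_nat (C : ℝ) {ε : ℝ} (hε : 0 < ε) :
    ∀ᶠ N : ℕ in atTop, C ≤ ε * N :=
  (tendsto_natCast_atTop_atTop.const_mul_atTop hε).eventually_ge_atTop C

lemma MeanZero.shift {f : ℕ → ℂ} (hf : MeanZero f) (hb : ∀ n, ‖f n‖ ≤ 1) (h : ℕ) :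
    MeanZero (fun n => f (n + h)) := by
  rw [meanZero_iff] at hf ⊢
  intro ε hε
  filter_upwards [hf (ε / 2) (by positivity),
    eventually_const_le_mul_nat (2 * h) (half_pos hε)] with N h1 h2
  have h3 := norm_sum_shift_sub_le hb h N
  have h4 := norm_le_norm_add_norm_sub (∑ n ∈ range N, f n) (∑ n ∈ range N, f (n + h))
  rw [norm_sub_rev] at h4
  linarith

/-- For sequences `w h` that are pairwise orthogonal in the mean, only the diagonal
contributes to the mean square of their sum. -/
lemma eventually_sum_norm_sq_le {w : ℕ → ℕ → ℂ} (hw : ∀ h n, ‖w h n‖ ≤ 1) (H : ℕ)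
    (ho : ∀ h k, h ≠ k → MeanZero (fun n => w h n * starRingEnd ℂ (w k n))) :
    ∀ᶠ N : ℕ in atTop, ∑ n ∈ range N, ‖∑ h ∈ range H, w h n‖ ^ 2 ≤ (H + 1) * N := by
  have hF : MeanZero (fun n => ∑ p ∈ (range H).offDiag,
      w p.1 n * starRingEnd ℂ (w p.2 n)) :=
    MeanZero.sum _ fun p hp => ho _ _ (mem_offDiag.1 hp).2.2
  rw [meanZero_iff] at hF
  filter_upwards [hF 1 one_pos] with N hN
  have key : ∀ n, ((‖∑ h ∈ range H, w h n‖ ^ 2 : ℝ) : ℂ)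
      = ((∑ h ∈ range H, ‖w h n‖ ^ 2 : ℝ) : ℂ)
        + ∑ p ∈ (range H).offDiag, w p.1 n * starRingEnd ℂ (w p.2 n) := by
    intro n
    push_cast
    rw [← Complex.mul_conj', map_sum, sum_mul_sum, ← sum_product', ← diag_union_offDiag,
      sum_union (disjoint_diag_offDiag _), sum_diag]
    simp only [Complex.mul_conj']
  have h1 : ((∑ n ∈ range N, ‖∑ h ∈ range H, w h n‖ ^ 2 : ℝ) : ℂ)
      = ((∑ n ∈ range N, ∑ h ∈ range H, ‖w h n‖ ^ 2 : ℝ) : ℂ)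
        + ∑ n ∈ range N, ∑ p ∈ (range H).offDiag, w p.1 n * starRingEnd ℂ (w p.2 n) := by
    rw [Complex.ofReal_sum, sum_congr rfl fun n _ => key n, sum_add_distrib, ← Complex.ofReal_sum]
  have h2 : ∑ n ∈ range N, ∑ h ∈ range H, ‖w h n‖ ^ 2 ≤ N * H := by
    calc ∑ n ∈ range N, ∑ h ∈ range H, ‖w h n‖ ^ 2 ≤ ∑ n ∈ range N, ∑ h ∈ range H, (1 : ℝ) :=
          sum_le_sum fun n _ => sum_le_sum fun h _ => pow_le_one₀ (norm_nonneg _) (hw h n)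
      _ = N * H := by simp
  have h3 := congrArg Complex.re h1
  rw [Complex.add_re, Complex.ofReal_re, Complex.ofReal_re] at h3
  have h4 := (Complex.re_le_norm (∑ n ∈ range N, ∑ p ∈ (range H).offDiag,
    w p.1 n * starRingEnd ℂ (w p.2 n))).trans hN
  rw [h3]
  linarith

/-- Van der Corput's difference theorem. -/
lemma meanZero_of_correlations {z : ℕ → ℂ} (hz : ∀ n, ‖z n‖ ≤ 1)
    (hc : ∀ h, 0 < h → MeanZero (fun n => z (n + h) * starRingEnd ℂ (z n))) : MeanZero z := by
  have ho : ∀ h k, h ≠ k → MeanZero (fun n => z (n + h) * starRingEnd ℂ (z (n + k))) := by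
    have hlt : ∀ h k, k < h → MeanZero (fun n => z (n + h) * starRingEnd ℂ (z (n + k))) := by
      intro h k hkh
      have := (hc (h - k) (by omega)).shift (fun n => by
        rw [norm_mul, RCLike.norm_conj]
        exact mul_le_one₀ (hz _) (norm_nonneg _) (hz _)) k
      have e : ∀ n, n + k + (h - k) = n + h := by intro n; omega
      simpa only [e] using this
    intro h k hne
    rcases lt_or_gt_of_ne hne with hlt' | hlt'
    · have := hlt k h hlt'
      rw [meanZero_iff] at this ⊢
      intro ε hε
      filter_upwards [this ε hε] with N hN
      rw [← RCLike.norm_conj, map_sum]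
      simpa only [map_mul, Complex.conj_conj, mul_comm] using hN
    · exact hlt h k hlt'
  rw [meanZero_iff]
  intro ε hε
  obtain ⟨δ, hδ, hδε⟩ : ∃ δ > 0, 3 * δ = ε := ⟨ε / 3, by positivity, by ring⟩
  obtain ⟨H, hH⟩ := exists_nat_ge (2 / δ ^ 2)
  have hH0 : (0 : ℝ) < H := lt_of_lt_of_le (by positivity) hH
  have hH1 : (1 : ℝ) ≤ H := by
    have : 0 < H := by exact_mod_cast hH0
    exact_mod_cast this
  rw [div_le_iff₀ (by positivity)] at hH
  filter_upwards [eventually_sum_norm_sq_le (w := fun h n => z (n + h)) (fun h n => hz _) H ho,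
    eventually_const_le_mul_nat (2 * H) hδ] with N h1 h2
  have h3 : ‖(H : ℂ) * ∑ n ∈ range N, z n - ∑ n ∈ range N, ∑ h ∈ range H, z (n + h)‖
      ≤ H * (2 * H) := by
    rw [sum_comm]
    have : (H : ℂ) * ∑ n ∈ range N, z n = ∑ h ∈ range H, ∑ n ∈ range N, z n := by simp
    rw [this, ← sum_sub_distrib]
    refine (norm_sum_le _ _).trans ?_
    calc _ ≤ ∑ h ∈ range H, (2 * H : ℝ) := by
          refine sum_le_sum fun h hh => ?_
          rw [norm_sub_rev]
          refine (norm_sum_shift_sub_le hz h N).trans ?_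
          have : (h : ℝ) ≤ H := by exact_mod_cast (mem_range.1 hh).le
          linarith
      _ = H * (2 * H) := by simp
  -- the inequality `x ≤ δH + x²/(δH)` plays the role of Cauchy–Schwarz
  have h4 : ‖∑ n ∈ range N, ∑ h ∈ range H, z (n + h)‖
      ≤ N * (δ * H) + (H + 1) * N / (δ * H) := by
    refine (norm_sum_le _ _).trans ?_
    have hx : ∀ x : ℝ, x ≤ δ * H + x ^ 2 / (δ * H) := by
      intro x
      have hp : 0 < δ * H := by positivity
      have : δ * H + x ^ 2 / (δ * H) - x = ((δ * H) ^ 2 + x ^ 2 - x * (δ * H)) / (δ * H) := by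
        field_simp
      have h5 : 0 ≤ ((δ * H) ^ 2 + x ^ 2 - x * (δ * H)) / (δ * H) :=
        div_nonneg (by nlinarith [sq_nonneg (δ * H - x)]) hp.le
      linarith
    refine (sum_le_sum fun n _ => hx _).trans ?_
    rw [sum_add_distrib, ← sum_div]
    simp only [sum_const, card_range, nsmul_eq_mul]
    gcongr
  have h5 : (H + 1) * N / (δ * H) ≤ δ * H * N := by
    rw [div_le_iff₀ (by positivity)]
    have : (H : ℝ) + 1 ≤ δ * H * (δ * H) := by nlinarith
    nlinarith [Nat.cast_nonneg (α := ℝ) N]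
  have h6 := norm_le_norm_add_norm_sub (∑ n ∈ range N, ∑ h ∈ range H, z (n + h))
    ((H : ℂ) * ∑ n ∈ range N, z n)
  rw [norm_sub_rev, norm_mul, Complex.norm_natCast] at h6
  have h7 : H * ‖∑ n ∈ range N, z n‖ ≤ H * (ε * N) := by
    have : (H : ℝ) * (2 * H) ≤ H * (δ * N) := by gcongr
    subst hδε
    nlinarith
  exact le_of_mul_le_mul_left h7 hH0

/-- Summation by parts: a total difference weighted by slowly varying factors has mean zero. -/
lemma meanZero_mul_diff {a b : ℕ → ℂ} (hb : ∀ n, ‖b n‖ ≤ 1)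
    (ha : Tendsto (fun n => a (n + 1) - a n) atTop (nhds 0)) :
    MeanZero (fun n => a n * (b (n + 1) - b n)) := by
  have h1 : MeanZero (fun n => (a (n + 1) - a n) * b (n + 1)) := by
    apply meanZero_of_tendsto
    refine squeeze_zero_norm (fun n => ?_) (tendsto_zero_iff_norm_tendsto_zero.1 ha)
    rw [norm_mul]
    exact mul_le_of_le_one_right (norm_nonneg _) (hb _)
  have h2 : MeanZero (fun n => a (n + 1) * b (n + 1) - a n * b n) := by
    have ha' := meanZero_iff.1 (meanZero_of_tendsto ha)
    rw [meanZero_iff]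
    intro ε hε
    filter_upwards [ha' (ε / 2) (by positivity),
      eventually_const_le_mul_nat (‖a 0‖ + ‖a 0‖) (half_pos hε)] with N hN hN'
    rw [sum_range_sub (fun n => a n * b n)]
    rw [sum_range_sub] at hN
    have h3 : ‖a N * b N‖ ≤ ‖a N‖ := by
      rw [norm_mul]; exact mul_le_of_le_one_right (norm_nonneg _) (hb _)
    have h4 : ‖a 0 * b 0‖ ≤ ‖a 0‖ := by
      rw [norm_mul]; exact mul_le_of_le_one_right (norm_nonneg _) (hb _)
    have h5 := norm_sub_le (a N * b N) (a 0 * b 0)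
    have h6 := norm_sub_norm_le (a N) (a 0)
    linarith
  have h3 := h2.add (h1.const_mul (-1))
  refine h3.congr' (Eventually.of_forall fun n => ?_)
  ring

/-! ### The character `e` -/

lemma eC_add (x y : ℝ) : eC (x + y) = eC x * eC y := by
  simp only [eC, ← Complex.exp_add]
  congr 1; push_cast; ring

lemma eC_zero : eC 0 = 1 := by simp [eC]

lemma eC_sum {ι : Type*} (s : Finset ι) (f : ι → ℝ) : eC (∑ i ∈ s, f i) = ∏ i ∈ s, eC (f i) := by
  simp only [eC, ← Complex.exp_sum]
  congr 1; push_cast; rw [mul_sum]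

lemma eC_eq (x : ℝ) : eC x = Complex.exp (Complex.I * ((2 * Real.pi * x : ℝ) : ℂ)) := by
  unfold eC; congr 1; push_cast; ring

lemma norm_eC (x : ℝ) : ‖eC x‖ = 1 := by
  rw [eC_eq, mul_comm, Complex.norm_exp_ofReal_mul_I]

lemma conj_eC (x : ℝ) : starRingEnd ℂ (eC x) = eC (-x) := by
  rw [eC_eq, eC_eq, ← Complex.exp_conj]
  congr 1
  rw [map_mul, Complex.conj_I, Complex.conj_ofReal]
  push_cast; ring

lemma eC_sub (x y : ℝ) : eC (x - y) = eC x * starRingEnd ℂ (eC y) := by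
  rw [conj_eC, ← eC_add, sub_eq_add_neg]

lemma eC_int (k : ℤ) : eC k = 1 := by
  unfold eC
  rw [Complex.exp_eq_one_iff]
  exact ⟨k, by push_cast; ring⟩

lemma continuous_eC : Continuous eC := by
  unfold eC; fun_prop

lemma norm_eC_sub_one_le (x : ℝ) : ‖eC x - 1‖ ≤ 2 * Real.pi * |x| := by
  rw [eC_eq]
  refine Real.norm_exp_I_mul_ofReal_sub_one_le.trans ?_
  rw [Real.norm_eq_abs, abs_mul, abs_of_pos Real.two_pi_pos]

lemma le_norm_eC_sub_one {x : ℝ} (hx : |x| ≤ 1 / 2) : 4 * |x| ≤ ‖eC x - 1‖ := by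
  rw [eC_eq, Complex.norm_exp_I_mul_ofReal_sub_one, norm_mul, Real.norm_eq_abs, Real.norm_eq_abs]
  have e : 2 * Real.pi * x / 2 = Real.pi * x := by ring
  have hp := Real.pi_pos
  have h1 : |Real.pi * x| = Real.pi * |x| := by rw [abs_mul, abs_of_pos hp]
  have h2 : |Real.pi * x| ≤ Real.pi / 2 := by rw [h1]; nlinarith
  have h3 := Real.mul_abs_le_abs_sin h2
  rw [h1] at h3
  have h4 : 2 / Real.pi * (Real.pi * |x|) = 2 * |x| := by field_simp
  rw [e, abs_of_pos (by norm_num : (0 : ℝ) < 2)]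
  linarith

lemma norm_eC_sub_eC_le (x y : ℝ) : ‖eC x - eC y‖ ≤ 2 * Real.pi * |x - y| := by
  have : eC x - eC y = eC y * (eC (x - y) - 1) := by
    rw [mul_sub, ← eC_add, mul_one]; congr 2; ring
  rw [this, norm_mul, norm_eC, one_mul]
  exact norm_eC_sub_one_le _

/-! ### Sequences behaving like a power of `n` -/

/-- `e(u)` has mean zero when the increments `d` of `u` tend to zero so slowly that `1 / d` has
increments tending to zero. Here `e(u n) = (e(u (n+1)) - e(u n)) / (e(d n) - 1)` is summed by
parts. -/
lemma meanZero_eC_of_slow {u : ℕ → ℝ}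
    (h0 : Tendsto (fun n => fwdDiff 1 u n) atTop (nhds 0))
    (hne : ∀ᶠ n in atTop, fwdDiff 1 u n ≠ 0)
    (h2 : Tendsto (fun n => (fwdDiff 1 u (n + 1) - fwdDiff 1 u n) /
      (fwdDiff 1 u n * fwdDiff 1 u (n + 1))) atTop (nhds 0)) :
    MeanZero (fun n => eC (u n)) := by
  set d := fwdDiff 1 u with hd
  have hsmall : ∀ᶠ n in atTop, |d n| ≤ 1 / 2 := by
    have := (NormedAddGroup.tendsto_nhds_zero.1 h0) (1 / 2) (by norm_num)
    filter_upwards [this] with n hn using hn.le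
  have hgood : ∀ᶠ n in atTop, 4 * |d n| ≤ ‖eC (d n) - 1‖ ∧ 0 < |d n| := by
    filter_upwards [hsmall, hne] with n h1 h2
    exact ⟨le_norm_eC_sub_one h1, abs_pos.2 h2⟩
  have hgood' := (tendsto_add_atTop_nat 1).eventually hgood
  have ha : Tendsto (fun n => (eC (d (n + 1)) - 1)⁻¹ - (eC (d n) - 1)⁻¹) atTop (nhds 0) := by
    have hlim : Tendsto (fun n => 2 * Real.pi / 16 * ‖(d (n + 1) - d n) / (d n * d (n + 1))‖)
        atTop (nhds 0) := by
      simpa using (tendsto_zero_iff_norm_tendsto_zero.1 h2).const_mul (2 * Real.pi / 16)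
    refine squeeze_zero_norm' ?_ hlim
    filter_upwards [hgood, hgood'] with n h1 h2
    have n1 : eC (d n) - 1 ≠ 0 := norm_pos_iff.1 (by linarith [h1.1, h1.2])
    have n2 : eC (d (n + 1)) - 1 ≠ 0 := norm_pos_iff.1 (by linarith [h2.1, h2.2])
    have e1 : (eC (d (n + 1)) - 1)⁻¹ - (eC (d n) - 1)⁻¹
        = (eC (d n) - eC (d (n + 1))) / ((eC (d n) - 1) * (eC (d (n + 1)) - 1)) := by
      field_simp; ring
    rw [e1, norm_div, norm_mul, Real.norm_eq_abs, abs_div, abs_mul]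
    have e2 : 2 * Real.pi / 16 * (|d (n + 1) - d n| / (|d n| * |d (n + 1)|))
        = (2 * Real.pi * |d n - d (n + 1)|) / ((4 * |d n|) * (4 * |d (n + 1)|)) := by
      rw [abs_sub_comm]
      have := h1.2.ne'
      have := h2.2.ne'
      field_simp; ring
    rw [e2]
    have := h1.2
    have := h2.2
    exact div_le_div₀ (by positivity) (norm_eC_sub_eC_le _ _) (by positivity)
      (mul_le_mul h1.1 h2.1 (by positivity) (norm_nonneg _))
  have h3 := meanZero_mul_diff (a := fun n => (eC (d n) - 1)⁻¹) (b := fun n => eC (u n))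
    (fun n => (norm_eC _).le) ha
  refine h3.congr' ?_
  filter_upwards [hgood] with n h1
  have n1 : eC (d n) - 1 ≠ 0 := norm_pos_iff.1 (by linarith [h1.1, h1.2])
  have e : eC (u (n + 1)) = eC (u n) * eC (d n) := by
    rw [← eC_add, hd, fwdDiff]; congr 1; ring
  rw [e]
  field_simp

/-- `u` behaves like `L n ^ c` together with all its iterated differences:
`Δᵏ u n ∼ L c(c-1)⋯(c-k+1) n ^ (c-k)` for every `k`. -/
def PowerLike (c L : ℝ) (u : ℕ → ℝ) : Prop :=
  ∀ k : ℕ, Tendsto (fun n : ℕ => (fwdDiff 1)^[k] u n / (n : ℝ) ^ (c - k)) atTop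
    (nhds (L * ∏ j ∈ range k, (c - j)))

lemma tendsto_shift_div_rpow (j : ℕ) (a : ℝ) :
    Tendsto (fun n : ℕ => (((n + j : ℕ) : ℝ) / n) ^ a) atTop (nhds 1) := by
  have h1 : Tendsto (fun n : ℕ => ((n + j : ℕ) : ℝ) / n) atTop (nhds 1) := by
    have h2 : Tendsto (fun n : ℕ => 1 + (j : ℝ) / n) atTop (nhds (1 + 0)) :=
      tendsto_const_nhds.add (tendsto_const_div_atTop_nhds_zero_nat _)
    rw [add_zero] at h2
    refine h2.congr' ?_
    filter_upwards [eventually_gt_atTop 0] with n hn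
    have : (n : ℝ) ≠ 0 := by positivity
    push_cast; field_simp
  simpa using h1.rpow_const (p := a) (Or.inl one_ne_zero)

lemma tendsto_shift_div {v : ℕ → ℝ} {a l : ℝ}
    (hv : Tendsto (fun n : ℕ => v n / (n : ℝ) ^ a) atTop (nhds l)) (j : ℕ) :
    Tendsto (fun n : ℕ => v (n + j) / (n : ℝ) ^ a) atTop (nhds l) := by
  have h1 := ((tendsto_add_atTop_iff_nat j).2 hv).mul (tendsto_shift_div_rpow j a)
  rw [mul_one] at h1
  refine h1.congr' ?_
  filter_upwards [eventually_gt_atTop 0] with n hn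
  have hn' : (0 : ℝ) < n := by exact_mod_cast hn
  have hn2 : (0 : ℝ) < ((n + j : ℕ) : ℝ) := by positivity
  rw [Real.div_rpow hn2.le hn'.le]
  have := (Real.rpow_pos_of_pos hn' a).ne'
  have := (Real.rpow_pos_of_pos hn2 a).ne'
  field_simp

/-- Differencing with step `h` lowers the exponent by one, because
`Δᵏ (u (· + h) - u) n = ∑_{j<h} Δᵏ⁺¹ u (n + j)`. -/
lemma PowerLike.fwdDiff {c L : ℝ} {u : ℕ → ℝ} (hu : PowerLike c L u) (h : ℕ) :
    PowerLike (c - 1) (h * L * c) (fwdDiff h u) := by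
  intro k
  have hcomm : (_root_.fwdDiff 1)^[k] (_root_.fwdDiff h u)
      = _root_.fwdDiff h ((_root_.fwdDiff 1)^[k] u) := by
    have : Function.Commute (_root_.fwdDiff (G := ℝ) (1 : ℕ)) (_root_.fwdDiff h) := by
      intro f; funext n
      simp only [_root_.fwdDiff]
      rw [add_right_comm]; ring
    exact (this.iterate_left k) u
  have hsum : ∀ n, (_root_.fwdDiff 1)^[k] (_root_.fwdDiff h u) n
      = ∑ j ∈ range h, (_root_.fwdDiff 1)^[k + 1] u (n + j) := by
    intro n
    rw [hcomm]
    have := sum_range_sub (fun j => (_root_.fwdDiff 1)^[k] u (n + j)) h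
    simp only [_root_.fwdDiff, add_zero] at this ⊢
    rw [← this]
    refine sum_congr rfl fun j _ => ?_
    rw [Function.iterate_succ_apply']
    rfl
  have h1 : Tendsto (fun n : ℕ => ∑ j ∈ range h,
      (_root_.fwdDiff 1)^[k + 1] u (n + j) / (n : ℝ) ^ (c - (k + 1 : ℕ))) atTop
      (nhds (∑ _j ∈ range h, L * ∏ i ∈ range (k + 1), (c - i))) :=
    tendsto_finsetSum _ fun j _ => tendsto_shift_div (hu (k + 1)) j
  have e1 : (∑ _j ∈ range h, L * ∏ i ∈ range (k + 1), (c - i))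
      = h * L * c * ∏ j ∈ range k, (c - 1 - j) := by
    rw [prod_range_succ', sum_const, card_range, nsmul_eq_mul]
    have : ∀ i : ℕ, c - ((i + 1 : ℕ) : ℝ) = c - 1 - i := by intro i; push_cast; ring
    simp only [this]
    push_cast; ring
  rw [e1] at h1
  refine h1.congr fun n => ?_
  rw [hsum, sum_div]
  congr! 3
  push_cast; ring

lemma PowerLike.meanZero_of_lt_one {c L : ℝ} {u : ℕ → ℝ} (hu : PowerLike c L u) (hL : L ≠ 0)
    (hc : 0 < c) (hc1 : c < 1) : MeanZero (fun n => eC (u n)) := by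
  have h1 : Tendsto (fun n : ℕ => _root_.fwdDiff 1 u n / (n : ℝ) ^ (c - 1)) atTop
      (nhds (L * c)) := by simpa using hu 1
  have h2 : Tendsto (fun n : ℕ => (_root_.fwdDiff 1 u (n + 1) - _root_.fwdDiff 1 u n)
      / (n : ℝ) ^ (c - 2)) atTop (nhds (L * (c * (c - 1)))) := by
    have := hu 2
    simp only [prod_range_succ, range_zero, prod_empty, Nat.cast_zero, Nat.cast_one, sub_zero,
      one_mul, Nat.cast_ofNat] at this
    exact this
  have h1' := tendsto_shift_div h1 1
  have hLc : L * c ≠ 0 := mul_ne_zero hL hc.ne'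
  have hpow : ∀ a : ℝ, 0 < a → Tendsto (fun n : ℕ => (n : ℝ) ^ (-a)) atTop (nhds 0) :=
    fun a ha => (tendsto_rpow_neg_atTop ha).comp tendsto_natCast_atTop_atTop
  have hposn : ∀ᶠ n : ℕ in atTop, (0 : ℝ) < n := by
    filter_upwards [eventually_gt_atTop 0] with n hn
    exact_mod_cast hn
  apply meanZero_eC_of_slow
  · have := h1.mul (hpow (1 - c) (by linarith))
    rw [mul_zero] at this
    refine this.congr' ?_
    filter_upwards [hposn] with n hn
    have e : -(1 - c) = c - 1 := by ring
    rw [e, div_mul_cancel₀ _ (Real.rpow_pos_of_pos hn _).ne']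
  · filter_upwards [h1.eventually_ne hLc] with n hn h0
    simp [h0] at hn
  · have h3 := (h2.div (h1.mul h1') (mul_ne_zero hLc hLc)).mul (hpow c hc)
    rw [mul_zero] at h3
    refine h3.congr' ?_
    filter_upwards [hposn, h1.eventually_ne hLc, h1'.eventually_ne hLc] with n hn hn1 hn2
    have e : (n : ℝ) ^ (c - 2) * (n : ℝ) ^ (-(c - 1)) * (n : ℝ) ^ (-(c - 1)) * (n : ℝ) ^ c
        = 1 := by
      rw [← Real.rpow_add hn, ← Real.rpow_add hn, ← Real.rpow_add hn]
      ring_nf; simp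
    have p1 := (Real.rpow_pos_of_pos hn (c - 1)).ne'
    have p2 := (Real.rpow_pos_of_pos hn (c - 2)).ne'
    have p3 := (Real.rpow_pos_of_pos hn c).ne'
    have d1 : _root_.fwdDiff 1 u n ≠ 0 := fun h => by simp [h] at hn1
    have d2 : _root_.fwdDiff 1 u (n + 1) ≠ 0 := fun h => by simp [h] at hn2
    rw [Real.rpow_neg hn.le] at e
    rw [Real.rpow_neg hn.le]
    simp only [Pi.div_apply]
    field_simp at e ⊢
    linear_combination (-(_root_.fwdDiff 1 u (n + 1) - _root_.fwdDiff 1 u n)) * e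

/-- Weyl sums: the differencing `u ↦ u (· + h) - u` lowers the exponent `c` by one, so the
difference theorem reduces everything to `0 < c < 1`. The factor `c` acquired by `L` at every
step is nonzero because `c` is not an integer. -/
lemma PowerLike.meanZero {c L : ℝ} {u : ℕ → ℝ} (hu : PowerLike c L u) (hL : L ≠ 0)
    (hc : 0 < c) (hint : ∀ k : ℤ, c ≠ k) : MeanZero (fun n => eC (u n)) := by
  obtain ⟨K, hK⟩ := exists_nat_gt c
  induction K generalizing c L u with
  | zero => simp at hK; linarith
  | succ K ih =>
    rcases lt_or_ge c 1 with h1 | h1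
    · exact hu.meanZero_of_lt_one hL hc h1
    · have h1' : 1 < c := lt_of_le_of_ne h1 fun h => hint 1 (by simp [← h])
      refine meanZero_of_correlations (fun n => (norm_eC _).le) fun h hh => ?_
      have hh' : (h : ℝ) ≠ 0 := by positivity
      have := ih (hu.fwdDiff h) (mul_ne_zero (mul_ne_zero hh' hL) hc.ne') (by linarith)
        (fun k hk => hint (k + 1) (by push_cast; linarith)) (by push_cast at hK; linarith)
      simpa only [_root_.fwdDiff, eC_sub] using this

/-! ### Generalized polynomials -/

lemma hasDerivAt_fwdDiff_iter_rpow (k : ℕ) (c : ℝ) {t : ℝ} (ht : 0 < t) :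
    HasDerivAt ((fwdDiff 1)^[k] (fun s : ℝ => s ^ c))
      (c * (fwdDiff 1)^[k] (fun s : ℝ => s ^ (c - 1)) t) t := by
  induction k generalizing t with
  | zero => exact Real.hasDerivAt_rpow_const (Or.inl ht.ne')
  | succ k ih =>
    rw [Function.iterate_succ_apply', Function.iterate_succ_apply']
    have h1 := ((ih (t := t + 1) (by linarith)).comp_add_const t 1).sub (ih ht)
    refine h1.congr_deriv ?_
    rw [fwdDiff, mul_sub]

/-- `Δᵏ tᶜ ∼ c(c-1)⋯(c-k+1) t ^ (c-k)`. By the mean value theorem `Δᵏ⁺¹ tᶜ = c Δᵏ (θ ^ (c-1))` for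
some `θ ∈ [t, t+1]`. -/
lemma tendsto_fwdDiff_iter_rpow (k : ℕ) (c : ℝ) :
    Tendsto (fun t : ℝ => (fwdDiff 1)^[k] (fun s : ℝ => s ^ c) t / t ^ (c - k)) atTop
      (nhds (∏ j ∈ range k, (c - j))) := by
  induction k generalizing c with
  | zero =>
    refine tendsto_const_nhds.congr' ?_
    filter_upwards [eventually_gt_atTop 0] with t ht
    simp [(Real.rpow_pos_of_pos ht c).ne']
  | succ k ih =>
    have hmvt : ∀ t : ℝ, ∃ θ : ℝ, t ≤ θ ∧ θ ≤ t + 1 ∧ (0 < t →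
        (fwdDiff 1)^[k + 1] (fun s : ℝ => s ^ c) t
          = c * (fwdDiff 1)^[k] (fun s : ℝ => s ^ (c - 1)) θ) := by
      intro t
      by_cases ht : 0 < t
      · obtain ⟨θ, hθ, he⟩ := exists_hasDerivAt_eq_slope ((fwdDiff 1)^[k] (fun s : ℝ => s ^ c))
          (fun t => c * (fwdDiff 1)^[k] (fun s : ℝ => s ^ (c - 1)) t) (lt_add_one t)
          (fun x hx => (hasDerivAt_fwdDiff_iter_rpow k c
            (lt_of_lt_of_le ht hx.1)).continuousAt.continuousWithinAt)
          (fun x hx => hasDerivAt_fwdDiff_iter_rpow k c (ht.trans hx.1))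
        refine ⟨θ, hθ.1.le, hθ.2.le, fun _ => ?_⟩
        rw [he, Function.iterate_succ_apply', fwdDiff]
        simp
      · exact ⟨t, le_rfl, by linarith, fun h => absurd h ht⟩
    choose θ hθ1 hθ2 hθ using hmvt
    have hθtop : Tendsto θ atTop atTop := tendsto_atTop_mono hθ1 tendsto_id
    have hratio : Tendsto (fun t => θ t / t) atTop (nhds 1) := by
      have hup : Tendsto (fun t : ℝ => 1 + t⁻¹) atTop (nhds 1) := by
        simpa using tendsto_inv_atTop_zero.const_add (1 : ℝ)
      refine tendsto_of_tendsto_of_tendsto_of_le_of_le' tendsto_const_nhds hup ?_ ?_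
      · filter_upwards [eventually_gt_atTop 0] with t ht
        rw [le_div_iff₀ ht]; linarith [hθ1 t]
      · filter_upwards [eventually_gt_atTop 0] with t ht
        rw [div_le_iff₀ ht, add_mul, inv_mul_cancel₀ ht.ne']; linarith [hθ2 t]
    have h1 := (((ih (c - 1)).comp hθtop).const_mul c).mul
      (hratio.rpow_const (p := c - 1 - k) (Or.inl one_ne_zero))
    have e1 : c * (∏ j ∈ range k, (c - 1 - j)) * (1 : ℝ) ^ (c - 1 - k)
        = ∏ j ∈ range (k + 1), (c - j) := by
      rw [prod_range_succ', Real.one_rpow]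
      have : ∀ i : ℕ, c - ((i + 1 : ℕ) : ℝ) = c - 1 - i := by intro i; push_cast; ring
      simp only [this]
      push_cast; ring
    rw [e1] at h1
    refine h1.congr' ?_
    filter_upwards [eventually_gt_atTop 0] with t ht
    have hp : 0 < θ t := lt_of_lt_of_le ht (hθ1 t)
    have e2 : c - ((k + 1 : ℕ) : ℝ) = c - 1 - k := by push_cast; ring
    rw [hθ t ht, e2, Real.div_rpow hp.le ht.le]
    have := (Real.rpow_pos_of_pos ht (c - 1 - k)).ne'
    have := (Real.rpow_pos_of_pos hp (c - 1 - k)).ne'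
    simp only [Function.comp]
    field_simp

lemma fwdDiff_iter_natCast (f : ℝ → ℝ) (k n : ℕ) :
    (fwdDiff 1)^[k] (fun n : ℕ => f n) n = (fwdDiff 1)^[k] f (n : ℝ) := by
  induction k generalizing n with
  | zero => rfl
  | succ k ih => simp only [Function.iterate_succ_apply', fwdDiff, ih]; push_cast; rfl

lemma powerLike_rpow (c : ℝ) : PowerLike c 1 (fun n : ℕ => (n : ℝ) ^ c) := by
  intro k
  rw [one_mul]
  refine ((tendsto_fwdDiff_iter_rpow k c).comp tendsto_natCast_atTop_atTop).congr fun n => ?_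
  simp only [Function.comp]
  rw [← fwdDiff_iter_natCast]

lemma PowerLike.const_mul {c L : ℝ} {u : ℕ → ℝ} (hu : PowerLike c L u) (a : ℝ) :
    PowerLike c (a * L) (fun n => a * u n) := by
  intro k
  have e : (fun n => a * u n) = a • u := rfl
  rw [e, fwdDiff_iter_const_smul, mul_assoc]
  refine ((hu k).const_mul a).congr fun n => ?_
  simp only [Pi.smul_apply, smul_eq_mul]; ring

/-- A lower-order power is negligible: it has leading coefficient zero with respect to a larger exponent. -/
lemma PowerLike.of_lt {c c' L : ℝ} {u : ℕ → ℝ} (hu : PowerLike c L u) (h : c < c') :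
    PowerLike c' 0 u := by
  intro k
  have h1 : Tendsto (fun n : ℕ => (n : ℝ) ^ (-(c' - c))) atTop (nhds 0) :=
    (tendsto_rpow_neg_atTop (sub_pos.2 h)).comp tendsto_natCast_atTop_atTop
  have h2 := (hu k).mul h1
  rw [mul_zero] at h2
  rw [zero_mul]
  refine h2.congr' ?_
  filter_upwards [eventually_gt_atTop 0] with n hn
  have hn' : (0 : ℝ) < n := by exact_mod_cast hn
  have e : (n : ℝ) ^ (c' - k) = (n : ℝ) ^ (c - k) * (n : ℝ) ^ (c' - c) := by
    rw [← Real.rpow_add hn']; congr 1; ring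
  rw [e, Real.rpow_neg hn'.le, ← div_eq_mul_inv, div_div]

lemma PowerLike.sum {ι : Type*} (s : Finset ι) {c : ℝ} {L : ι → ℝ} {u : ι → ℕ → ℝ}
    (hu : ∀ i ∈ s, PowerLike c (L i) (u i)) :
    PowerLike c (∑ i ∈ s, L i) (fun n => ∑ i ∈ s, u i n) := by
  intro k
  have e : (fun n => ∑ i ∈ s, u i n) = ∑ i ∈ s, u i := by funext n; simp
  rw [e, fwdDiff_iter_finsetSum, sum_mul]
  refine (tendsto_finsetSum s fun i hi => hu i hi k).congr fun n => ?_
  rw [Finset.sum_apply, sum_div]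

lemma meanZero_eC_sum_rpow {m : ℕ} {c : Fin m → ℝ} (hpos : ∀ i, 0 < c i) (hmono : StrictMono c)
    (hint : ∀ i, ∀ k : ℤ, c i ≠ (k : ℝ)) {η : Fin m → ℝ} (hη : ∃ i, η i ≠ 0) :
    MeanZero (fun n => eC (∑ i, η i * (n : ℝ) ^ c i)) := by
  classical
  have hne : (univ.filter fun i => η i ≠ 0).Nonempty := by
    obtain ⟨i, hi⟩ := hη
    exact ⟨i, by simp [hi]⟩
  -- the largest exponent occurring with a nonzero coefficient
  obtain ⟨j, hj, hjmax⟩ := exists_max_image _ id hne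
  simp only [mem_filter, mem_univ, true_and, id] at hj hjmax
  have key : PowerLike (c j) (∑ i, if i = j then η j else 0)
      (fun n : ℕ => ∑ i, η i * (n : ℝ) ^ c i) := by
    refine PowerLike.sum univ fun i _ => ?_
    split_ifs with hij
    · subst hij
      simpa using (powerLike_rpow (c i)).const_mul (η i)
    · by_cases h0 : η i = 0
      · simpa [h0] using (powerLike_rpow (c j)).const_mul 0
      · have hlt : c i < c j := hmono (lt_of_le_of_ne (hjmax i h0) hij)
        simpa using ((powerLike_rpow (c i)).of_lt hlt).const_mul (η i)
  rw [sum_ite_eq' univ j (fun _ => η j), if_pos (mem_univ j)] at key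
  exact key.meanZero hj (hpos j) (hint j)

/-! ### Removing the floors -/

/-- The normalized Fejér kernel `|(1/M) ∑_{j<M} e(jx)|²`. It equals `1` at the integers, and its
mean along an equidistributed sequence is `1/M`. -/
def fejer (M : ℕ) (x : ℝ) : ℝ := ‖∑ j ∈ range M, eC (j * x)‖ ^ 2 / M ^ 2

lemma continuous_fejer (M : ℕ) : Continuous (fejer M) := by
  unfold fejer
  have : ∀ j : ℕ, Continuous fun x : ℝ => eC (j * x) := fun j =>
    continuous_eC.comp (by fun_prop)
  fun_prop

lemma fejer_nonneg (M : ℕ) (x : ℝ) : 0 ≤ fejer M x := by unfold fejer; positivity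

lemma fejer_int {M : ℕ} (hM : 0 < M) (k : ℤ) : fejer M k = 1 := by
  have : ∀ j : ℕ, eC ((j : ℝ) * k) = 1 := fun j => by
    have := eC_int (j * k)
    push_cast at this
    exact this
  have hM' : (M : ℝ) ≠ 0 := by positivity
  simp [fejer, this, hM']

lemma fejer_fract (M : ℕ) (x : ℝ) : fejer M (Int.fract x) = fejer M x := by
  have : ∀ j : ℕ, eC ((j : ℝ) * Int.fract x) = eC (j * x) := fun j => by
    have h1 := eC_int (-(j * ⌊x⌋))
    have h2 : (j : ℝ) * Int.fract x = j * x + ((-(j * ⌊x⌋) : ℤ) : ℝ) := by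
      rw [Int.fract]; push_cast; ring
    rw [h2, eC_add, h1, mul_one]
  simp [fejer, this]

lemma eventually_sum_fejer_le {x : ℕ → ℝ} (hx : ∀ k : ℤ, k ≠ 0 → MeanZero (fun n => eC (k * x n)))
    {M : ℕ} (hM : 0 < M) :
    ∀ᶠ N : ℕ in atTop, ∑ n ∈ range N, fejer M (x n) ≤ 2 / M * N := by
  have hM' : (1 : ℝ) ≤ M := by exact_mod_cast hM
  filter_upwards [eventually_sum_norm_sq_le (w := fun j n => eC (j * x n))
    (fun j n => (norm_eC _).le) M (fun h k hne => by
      have := hx (h - k) (by omega)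
      refine this.congr' (Eventually.of_forall fun n => ?_)
      rw [← eC_sub]; congr 1; push_cast; ring)] with N hN
  unfold fejer
  rw [← sum_div, div_le_iff₀ (by positivity)]
  refine hN.trans ?_
  have : 2 / (M : ℝ) * N * M ^ 2 = 2 * M * N := by field_simp
  rw [this]
  gcongr
  linarith

/-- If `x` is equidistributed mod `1` (in the form of Weyl's criterion) and `e((ξ+k)x) R` has mean
zero for every `k ∈ ℤ`, then so does `e(ξ⌊x⌋) R`. Here `e(ξ⌊x⌋) = e(ξx) e(-ξ{x})`. Multiplying the `1`-periodic factor `e(-ξ{x})` by `1 - fejer M x`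
removes its jump at the integers, at the cost of an error of mean `O(1/M)`; the resulting
continuous periodic function is a uniform limit of trigonometric polynomials. -/
lemma meanZero_floor {x : ℕ → ℝ} {R : ℕ → ℂ} {ξ : ℝ} (hR : ∀ n, ‖R n‖ ≤ 1)
    (hx : ∀ k : ℤ, k ≠ 0 → MeanZero (fun n => eC (k * x n)))
    (hxR : ∀ k : ℤ, MeanZero (fun n => eC ((ξ + k) * x n) * R n)) :
    MeanZero (fun n => eC (ξ * (⌊x n⌋ : ℝ)) * R n) := by
  rw [meanZero_iff]
  intro ε hε
  obtain ⟨δ, hδ, hδε⟩ : ∃ δ > 0, 3 * δ = ε := ⟨ε / 3, by positivity, by ring⟩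
  obtain ⟨M, hM⟩ := exists_nat_gt (2 / δ)
  have hM0 : (0 : ℝ) < M := lt_trans (by positivity) hM
  have hMpos : 0 < M := by exact_mod_cast hM0
  have hMδ : 2 / (M : ℝ) ≤ δ := by
    rw [div_lt_iff₀ hδ] at hM
    rw [div_le_iff₀ hM0]; linarith
  have hf0 : fejer M 0 = 1 := by simpa using fejer_int hMpos 0
  have hf1 : fejer M 1 = 1 := by simpa using fejer_int hMpos 1
  set b₀ : ℝ → ℂ := fun y => eC (-ξ * y) * ((1 - fejer M y : ℝ) : ℂ) with hb₀
  have hb₀c : Continuous b₀ := by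
    have h1 : Continuous fun y : ℝ => eC (-ξ * y) := continuous_eC.comp (by fun_prop)
    have h2 := continuous_fejer M
    exact h1.mul (Complex.continuous_ofReal.comp (by fun_prop))
  have hend : b₀ 0 = b₀ (0 + 1) := by simp [hb₀, hf0, hf1]
  let b : C(AddCircle (1 : ℝ), ℂ) :=
    ⟨AddCircle.liftIco 1 0 b₀, AddCircle.liftIco_continuous hend hb₀c.continuousOn⟩
  have hb : ∀ y : ℝ, b (y : AddCircle (1 : ℝ))
      = eC (-ξ * Int.fract y) * ((1 - fejer M y : ℝ) : ℂ) := by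
    intro y
    have h1 : (y : AddCircle (1 : ℝ)) = ((Int.fract y : ℝ) : AddCircle (1 : ℝ)) := by
      rw [← sub_eq_zero, ← AddCircle.coe_sub, AddCircle.coe_eq_zero_iff]
      exact ⟨⌊y⌋, by rw [Int.fract]; simp⟩
    rw [h1]
    change AddCircle.liftIco 1 0 b₀ _ = _
    rw [AddCircle.liftIco_coe_apply ⟨Int.fract_nonneg y, by simpa using Int.fract_lt_one y⟩,
      hb₀]
    simp only [fejer_fract]
  have hmem : b ∈ (Submodule.span ℂ (Set.range (@fourier (1 : ℝ)))).topologicalClosure := by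
    rw [span_fourier_closure_eq_top]; trivial
  obtain ⟨P, hP, hbP⟩ := Metric.mem_closure_iff.1 hmem δ hδ
  have hPmean : MeanZero (fun n => eC (ξ * x n) * P (x n : AddCircle (1 : ℝ)) * R n) := by
    clear hbP
    induction hP using Submodule.span_induction with
    | mem p hp =>
      obtain ⟨k, rfl⟩ := hp
      refine (hxR k).congr' (Eventually.of_forall fun n => ?_)
      rw [add_mul, eC_add, fourier_coe_apply]
      congr 2
      unfold eC
      congr 1; push_cast; ring
    | zero => simpa using MeanZero.zero
    | add p q _ _ hp hq =>
      refine (hp.add hq).congr' (Eventually.of_forall fun n => ?_)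
      simp only [ContinuousMap.add_apply]; ring
    | smul a p _ hp =>
      refine (hp.const_mul a).congr' (Eventually.of_forall fun n => ?_)
      simp only [ContinuousMap.smul_apply, smul_eq_mul]; ring
  filter_upwards [meanZero_iff.1 hPmean δ hδ, eventually_sum_fejer_le hx hMpos] with N h1 h2
  have hterm : ∀ n, ‖eC (ξ * (⌊x n⌋ : ℝ)) * R n
      - eC (ξ * x n) * P (x n : AddCircle (1 : ℝ)) * R n‖ ≤ fejer M (x n) + δ := by
    intro n
    have e1 : eC (ξ * (⌊x n⌋ : ℝ)) = eC (ξ * x n) * eC (-ξ * Int.fract (x n)) := by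
      rw [← eC_add, Int.fract]; congr 1; ring
    have e2 : eC (ξ * (⌊x n⌋ : ℝ)) * R n - eC (ξ * x n) * P (x n : AddCircle (1 : ℝ)) * R n
        = eC (ξ * x n) * (eC (-ξ * Int.fract (x n)) * (fejer M (x n) : ℂ)
          + (b (x n : AddCircle (1 : ℝ)) - P (x n : AddCircle (1 : ℝ)))) * R n := by
      rw [e1, hb]; push_cast; ring
    have h3 : ‖b (x n : AddCircle (1 : ℝ)) - P (x n : AddCircle (1 : ℝ))‖ ≤ δ := by
      rw [← dist_eq_norm]
      exact (ContinuousMap.dist_apply_le_dist _).trans hbP.le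
    have h4 : ‖eC (-ξ * Int.fract (x n)) * (fejer M (x n) : ℂ)‖ = fejer M (x n) := by
      rw [norm_mul, norm_eC, one_mul, Complex.norm_real, Real.norm_eq_abs,
        abs_of_nonneg (fejer_nonneg _ _)]
    rw [e2, norm_mul, norm_mul, norm_eC, one_mul]
    refine (mul_le_of_le_one_right (norm_nonneg _) (hR n)).trans ?_
    refine (norm_add_le _ _).trans ?_
    rw [h4]; linarith
  have h5 : ‖∑ n ∈ range N, eC (ξ * (⌊x n⌋ : ℝ)) * R n
      - ∑ n ∈ range N, eC (ξ * x n) * P (x n : AddCircle (1 : ℝ)) * R n‖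
      ≤ 2 / M * N + N * δ := by
    rw [← sum_sub_distrib]
    refine (norm_sum_le _ _).trans ((sum_le_sum fun n _ => hterm n).trans ?_)
    rw [sum_add_distrib]
    simp only [sum_const, card_range, nsmul_eq_mul]
    linarith
  have h6 := norm_le_norm_add_norm_sub'
    (∑ n ∈ range N, eC (ξ * (⌊x n⌋ : ℝ)) * R n)
    (∑ n ∈ range N, eC (ξ * x n) * P (x n : AddCircle (1 : ℝ)) * R n)
  have h7 : 2 / (M : ℝ) * N ≤ δ * N := by gcongr
  subst hδε
  linarith

/-- Floors are removed one index at a time: those in `s` are still present, while the others have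
been traded for the integer frequencies `k`. -/
lemma meanZero_partial {m : ℕ} {c : Fin m → ℝ} (hpos : ∀ i, 0 < c i) (hmono : StrictMono c)
    (hint : ∀ i, ∀ k : ℤ, c i ≠ (k : ℝ)) {ξ : Fin m → ℝ} (hξ : ∃ i, ∀ k : ℤ, ξ i + k ≠ 0)
    (s : Finset (Fin m)) (k : Fin m → ℤ) :
    MeanZero (fun n => eC (∑ i, if i ∈ s then ξ i * (⌊(n : ℝ) ^ c i⌋ : ℝ)
      else (ξ i + k i) * (n : ℝ) ^ c i)) := by
  induction s using Finset.induction_on generalizing k with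
  | empty =>
    simp only [notMem_empty, if_false]
    obtain ⟨i, hi⟩ := hξ
    exact meanZero_eC_sum_rpow hpos hmono hint (η := fun i => ξ i + k i) ⟨i, hi _⟩
  | insert j s hj ih =>
    have hx : ∀ l : ℤ, l ≠ 0 → MeanZero (fun n => eC (l * (n : ℝ) ^ c j)) := by
      intro l hl
      have hl' : (l : ℝ) ≠ 0 := by exact_mod_cast hl
      have := ((powerLike_rpow (c j)).const_mul (l : ℝ)).meanZero (by simpa using hl') (hpos j)
        (hint j)
      exact this
    set R : ℕ → ℂ := fun n => eC (∑ i ∈ univ.erase j, if i ∈ s then ξ i * (⌊(n : ℝ) ^ c i⌋ : ℝ)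
      else (ξ i + k i) * (n : ℝ) ^ c i) with hRdef
    have hxR : ∀ l : ℤ, MeanZero (fun n => eC ((ξ j + l) * (n : ℝ) ^ c j) * R n) := by
      intro l
      refine (ih (Function.update k j l)).congr' (Eventually.of_forall fun n => ?_)
      rw [hRdef, ← eC_add, ← add_sum_erase univ _ (mem_univ j), if_neg hj, Function.update_self]
      congr 2
      refine sum_congr rfl fun i hi => ?_
      rw [Function.update_of_ne (ne_of_mem_erase hi)]
    refine (meanZero_floor (ξ := ξ j) (fun n => (norm_eC _).le) hx hxR).congr'
      (Eventually.of_forall fun n => ?_)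
    rw [← eC_add, ← add_sum_erase univ _ (mem_univ j), if_pos (mem_insert_self j s)]
    congr 2
    refine sum_congr rfl fun i hi => ?_
    simp [mem_insert, ne_of_mem_erase hi]

open scoped Classical in
/-- limit of the exponential sums: for non-integer
`0 < c₁ < ⋯ < c_m` and `(ξ₁,…,ξ_m) ∈ [−1/2,1/2)^m`,
`(1/N) ∑_{n=1}^N e(ξ₁⌊n^{c₁}⌋+⋯+ξ_m⌊n^{c_m}⌋)` converges to `1` if all
`ξ_i = 0` and to `0` otherwise. -/
theorem stmt8 {m : ℕ} (hm : 0 < m) (c : Fin m → ℝ)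
    (hpos : ∀ i, 0 < c i) (hmono : StrictMono c)
    (hint : ∀ i, ∀ k : ℤ, c i ≠ (k : ℝ))
    (ξ : Fin m → ℝ) (hξ : ∀ i, ξ i ∈ Set.Ico (-(1/2) : ℝ) (1/2)) :
    Tendsto (fun N : ℕ => expSum m c ξ N) atTop
      (nhds (if ∀ i, ξ i = 0 then (1 : ℂ) else 0)) := by
  have hIcc : ∀ (N : ℕ) (f : ℕ → ℂ), ∑ n ∈ Finset.Icc 1 N, f n = ∑ n ∈ range N, f (n + 1) := by
    intro N f
    rw [range_eq_Ico, sum_Ico_add' f 0 N 1]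
    rfl
  split_ifs with h0
  · refine tendsto_const_nhds.congr' ?_
    filter_upwards [eventually_gt_atTop 0] with N hN
    have hN' : (N : ℂ) ≠ 0 := by exact_mod_cast hN.ne'
    simp [expSum, h0, eC_zero, hN']
  · push Not at h0
    obtain ⟨i, hi⟩ := h0
    -- a nonzero `ξ i` in `[-1/2, 1/2)` is not an integer
    have hξi : ∀ k : ℤ, ξ i + k ≠ 0 := by
      intro k hk
      obtain ⟨h1, h2⟩ := hξ i
      have h3 : (-1 : ℝ) < k := by linarith
      have h4 : (k : ℝ) < 1 := by linarith
      have h5 : k = 0 := by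
        have : -1 < k := by exact_mod_cast h3
        have : k < 1 := by exact_mod_cast h4
        omega
      subst h5
      exact hi (by simpa using hk)
    have key := (meanZero_partial hpos hmono hint ⟨i, hξi⟩ univ 0).shift
      (fun n => (norm_eC _).le) 1
    simp only [mem_univ, if_true] at key
    unfold expSum
    simp only [hIcc]
    exact key

end
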